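/- Let 𝒜 be a weak alternating automaton over an alphabet A and q a state of 𝒜. For every ω-word u : ℕ → A and every i ∈ ℕ, the suffix u[i,ω) is accepted from q by 𝒜 if and only if u[i,ω) is not accepted from q by the complementary automaton 𝒜̄. -/

import Mathlib

/-!
Statement 0: For a weak alternating automaton 𝒜 over alphabet `A` and a state `q`,
for every ω-word `u : ℕ → A` and every `i : ℕ`, the suffix `u[i,ω)` is accepted from `q`
by 𝒜 iff it is not accepted from `q` by the complementary automaton.
-/

/-- Transition conditions over state set `Q` and alphabet `A`: built from atoms `B ⊆ A`
and `○q` for `q ∈ Q` using disjunction and conjunction. -/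
inductive TCond (Q : Type*) (A : Type*) : Type _ where
  | atom : Set A → TCond Q A
  | next : Q → TCond Q A
  | or   : TCond Q A → TCond Q A → TCond Q A
  | and  : TCond Q A → TCond Q A → TCond Q A

namespace TCond

/-- `○q` occurs in the transition condition. -/
def NextOccurs {Q A : Type*} : TCond Q A → Q → Prop
  | atom _, _ => False
  | next q', q => q' = q
  | or τ₀ τ₁, q => τ₀.NextOccurs q ∨ τ₁.NextOccurs q
  | and τ₀ τ₁, q => τ₀.NextOccurs q ∨ τ₁.NextOccurs q

/-- The subformula relation on transition conditions. -/
inductive Subf {Q A : Type*} : TCond Q A → TCond Q A → Prop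
  | refl (τ : TCond Q A) : Subf τ τ
  | orL {χ τ₀ τ₁} : Subf χ τ₀ → Subf χ (or τ₀ τ₁)
  | orR {χ τ₀ τ₁} : Subf χ τ₁ → Subf χ (or τ₀ τ₁)
  | andL {χ τ₀ τ₁} : Subf χ τ₀ → Subf χ (and τ₀ τ₁)
  | andR {χ τ₀ τ₁} : Subf χ τ₁ → Subf χ (and τ₀ τ₁)

/-- The complementary (dual) transition condition: atoms `B` are replaced by `A ∖ B`,
`○q` is unchanged, and `∨`/`∧` are exchanged. -/
def dual {Q A : Type*} : TCond Q A → TCond Q A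
  | atom B => atom Bᶜ
  | next q => next q
  | or τ₀ τ₁ => and τ₀.dual τ₁.dual
  | and τ₀ τ₁ => or τ₀.dual τ₁.dual

theorem dual_nextOccurs {Q A : Type*} (τ : TCond Q A) (q : Q) :
    τ.dual.NextOccurs q ↔ τ.NextOccurs q := by
  induction τ <;> simp [dual, NextOccurs, *]

end TCond

/-- A weak alternating automaton over the alphabet `A` with state set `Q`:
a transition function `δ` and a partition of the states into recurring states
(the set `recurring`) and non-recurring states (its complement), such that any two states
in the same strongly connected component of the transition graph are both recurring or
both non-recurring. -/
structure WAA (Q : Type*) (A : Type*) where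
  δ : Q → TCond Q A
  recurring : Set Q
  weak : ∀ q q',
    Relation.ReflTransGen (fun x y => (δ x).NextOccurs y) q q' →
    Relation.ReflTransGen (fun x y => (δ x).NextOccurs y) q' q →
    (q ∈ recurring ↔ q' ∈ recurring)

namespace WAA

variable {Q A : Type*}

/-- The edge relation of the transition graph of a weak alternating automaton. -/
def Edge (M : WAA Q A) (q q' : Q) : Prop := (M.δ q).NextOccurs q'

/-- Vertices of run graphs: pairs of a position and either a state or a transition
condition. -/
abbrev Vert (Q A : Type*) := ℕ × (Q ⊕ TCond Q A)

/-- A run graph of a weak alternating automaton on an ω-word `u`. -/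
structure RunGraph (M : WAA Q A) (u : ℕ → A) where
  V : Set (Vert Q A)
  E : Vert Q A → Vert Q A → Prop
  edge_mem : ∀ ⦃v w⦄, E v w → v ∈ V ∧ w ∈ V
  /-- every transition-condition vertex carries a subformula of some `δ q` -/
  cond_subf : ∀ i τ, (i, Sum.inr τ) ∈ V → ∃ q, TCond.Subf τ (M.δ q)
  /-- a state vertex has exactly one outgoing edge, to `⟨i, δ q⟩` -/
  state_succ : ∀ i q, (i, Sum.inl q) ∈ V →
    ∀ w, E (i, Sum.inl q) w ↔ w = (i, Sum.inr (M.δ q))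
  /-- a `○q` vertex has exactly one outgoing edge, to `⟨i+1, q⟩` -/
  next_succ : ∀ i q, (i, Sum.inr (TCond.next q)) ∈ V →
    ∀ w, E (i, Sum.inr (TCond.next q)) w ↔ w = (i + 1, Sum.inl q)
  /-- a disjunction vertex has outgoing edges only to the disjuncts, and at least one -/
  or_succ_subset : ∀ i τ₀ τ₁, (i, Sum.inr (TCond.or τ₀ τ₁)) ∈ V →
    ∀ w, E (i, Sum.inr (TCond.or τ₀ τ₁)) w → w = (i, Sum.inr τ₀) ∨ w = (i, Sum.inr τ₁)
  or_succ_exists : ∀ i τ₀ τ₁, (i, Sum.inr (TCond.or τ₀ τ₁)) ∈ V →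
    ∃ w, E (i, Sum.inr (TCond.or τ₀ τ₁)) w
  /-- a conjunction vertex has outgoing edges exactly to the two conjuncts -/
  and_succ : ∀ i τ₀ τ₁, (i, Sum.inr (TCond.and τ₀ τ₁)) ∈ V →
    ∀ w, E (i, Sum.inr (TCond.and τ₀ τ₁)) w ↔ (w = (i, Sum.inr τ₀) ∨ w = (i, Sum.inr τ₁))
  /-- atom vertices have no outgoing edges -/
  atom_succ : ∀ i B w, ¬ E (i, Sum.inr (TCond.atom B)) w
  /-- there is no vertex `⟨i, B⟩` with `u i ∉ B` -/
  atom_ok : ∀ i B, (i, Sum.inr (TCond.atom B)) ∈ V → u i ∈ B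

/-- A run graph is final if on every infinite path, every state occurring infinitely
often (as the second component of vertices of the path) is recurring. -/
def RunGraph.Final {M : WAA Q A} {u : ℕ → A} (G : RunGraph M u) : Prop :=
  ∀ p : ℕ → Vert Q A, (∀ n, G.E (p n) (p (n + 1))) →
    ∀ q : Q, (∀ m, ∃ n, m ≤ n ∧ (p n).2 = Sum.inl q) → q ∈ M.recurring

/-- The suffix `u[i,ω)` is accepted from state `q` if some final run graph on `u`
contains the vertex `⟨i, q⟩`. -/
def AcceptsFrom (M : WAA Q A) (u : ℕ → A) (i : ℕ) (q : Q) : Prop :=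
  ∃ G : RunGraph M u, G.Final ∧ (i, Sum.inl q) ∈ G.V

/-- The complementary automaton: dual transition conditions, recurring and
non-recurring states exchanged. -/
def dual (M : WAA Q A) : WAA Q A where
  δ q := (M.δ q).dual
  recurring := M.recurringᶜ
  weak := by
    intro q q' h1 h2
    have mono : ∀ x y : Q, (M.δ x).dual.NextOccurs y → (M.δ x).NextOccurs y :=
      fun x y h => (TCond.dual_nextOccurs _ _).mp h
    have h1' : Relation.ReflTransGen (fun x y => (M.δ x).NextOccurs y) q q' :=
      Relation.ReflTransGen.mono mono _ _ h1
    have h2' : Relation.ReflTransGen (fun x y => (M.δ x).NextOccurs y) q' q :=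
      Relation.ReflTransGen.mono mono _ _ h2
    simpa [Set.mem_compl_iff] using not_congr (M.weak q q' h1' h2')

end WAA

theorem TCond.dual_dual_eq {Q A : Type*} (τ : TCond Q A) : τ.dual.dual = τ := by
  induction τ <;> simp [TCond.dual, *]

theorem TCond.Subf.dual' {Q A : Type*} {χ τ : TCond Q A} (h : TCond.Subf χ τ) :
    TCond.Subf χ.dual τ.dual := by
  induction h with
  | refl => exact .refl _
  | orL _ ih => exact .andL ih
  | orR _ ih => exact .andR ih
  | andL _ ih => exact .orL ih
  | andR _ ih => exact .orR ih

theorem TCond.Subf.nextOccurs' {Q A : Type*} {χ τ : TCond Q A} (h : TCond.Subf χ τ) (q : Q) :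
    χ.NextOccurs q → τ.NextOccurs q := by
  induction h with
  | refl => exact id
  | orL _ ih => exact fun h => Or.inl (ih h)
  | orR _ ih => exact fun h => Or.inr (ih h)
  | andL _ ih => exact fun h => Or.inl (ih h)
  | andR _ ih => exact fun h => Or.inr (ih h)

theorem TCond.Subf.trans' {Q A : Type*} {ψ χ τ : TCond Q A} (h : TCond.Subf χ τ) :
    TCond.Subf ψ χ → TCond.Subf ψ τ := by
  induction h with
  | refl => exact id
  | orL _ ih => exact fun h => .orL (ih h)
  | orR _ ih => exact fun h => .orR (ih h)
  | andL _ ih => exact fun h => .andL (ih h)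
  | andR _ ih => exact fun h => .andR (ih h)

namespace WAA

variable {Q A : Type*}

theorem dual_dual_eq (M : WAA Q A) : M.dual.dual = M := by
  cases M with
  | mk δ R w => simp [WAA.dual, TCond.dual_dual_eq]

/-- Syntactic successors. -/
def Succ (M : WAA Q A) : Vert Q A → Vert Q A → Prop
  | (i, Sum.inl q), w => w = (i, Sum.inr (M.δ q))
  | (_, Sum.inr (TCond.atom _)), _ => False
  | (i, Sum.inr (TCond.next q)), w => w = (i + 1, Sum.inl q)
  | (i, Sum.inr (TCond.or τ₀ τ₁)), w => w = (i, Sum.inr τ₀) ∨ w = (i, Sum.inr τ₁)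
  | (i, Sum.inr (TCond.and τ₀ τ₁)), w => w = (i, Sum.inr τ₀) ∨ w = (i, Sum.inr τ₁)

/-- Local correctness of a vertex relative to a set of vertices. -/
def Loc (M : WAA Q A) (u : ℕ → A) (S : Set (Vert Q A)) : Vert Q A → Prop
  | (i, Sum.inl q) => (i, Sum.inr (M.δ q)) ∈ S
  | (i, Sum.inr (TCond.atom B)) => u i ∈ B
  | (i, Sum.inr (TCond.next q)) => (i + 1, Sum.inl q) ∈ S
  | (i, Sum.inr (TCond.or τ₀ τ₁)) => (i, Sum.inr τ₀) ∈ S ∨ (i, Sum.inr τ₁) ∈ S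
  | (i, Sum.inr (TCond.and τ₀ τ₁)) => (i, Sum.inr τ₀) ∈ S ∧ (i, Sum.inr τ₁) ∈ S

def dualV : Vert Q A → Vert Q A
  | (i, Sum.inl q) => (i, Sum.inl q)
  | (i, Sum.inr τ) => (i, Sum.inr τ.dual)

theorem RunGraph.succ {M : WAA Q A} {u : ℕ → A} (G : RunGraph M u) {v w : Vert Q A}
    (h : G.E v w) : M.Succ v w := by
  have hv := (G.edge_mem h).1
  match v, hv, h with
  | (i, Sum.inl q), hv, h => exact (G.state_succ i q hv w).1 h
  | (i, Sum.inr (TCond.atom B)), hv, h => exact (G.atom_succ i B w h).elim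
  | (i, Sum.inr (TCond.next q)), hv, h => exact (G.next_succ i q hv w).1 h
  | (i, Sum.inr (TCond.or τ₀ τ₁)), hv, h => exact G.or_succ_subset i τ₀ τ₁ hv w h
  | (i, Sum.inr (TCond.and τ₀ τ₁)), hv, h => exact (G.and_succ i τ₀ τ₁ hv w).1 h

theorem joint_step {M : WAA Q A} {u : ℕ → A} (G : RunGraph M u) (G' : RunGraph M.dual u)
    (v : Vert Q A) (hv : v ∈ G.V) (hv' : dualV v ∈ G'.V) :
    ∃ w, G.E v w ∧ G'.E (dualV v) (dualV w) := by
  match v, hv, hv' with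
  | (i, Sum.inl q), hv, hv' =>
    exact ⟨_, (G.state_succ i q hv _).2 rfl, (G'.state_succ i q hv' _).2 rfl⟩
  | (i, Sum.inr (TCond.atom B)), hv, hv' =>
    exact (G'.atom_ok i _ hv' (G.atom_ok i B hv)).elim
  | (i, Sum.inr (TCond.next q)), hv, hv' =>
    exact ⟨_, (G.next_succ i q hv _).2 rfl, (G'.next_succ i q hv' _).2 rfl⟩
  | (i, Sum.inr (TCond.or τ₀ τ₁)), hv, hv' =>
    obtain ⟨w, hw⟩ := G.or_succ_exists i _ _ hv
    refine ⟨w, hw, (G'.and_succ i _ _ hv' _).2 ?_⟩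
    rcases G.or_succ_subset i _ _ hv w hw with rfl | rfl
    · exact Or.inl rfl
    · exact Or.inr rfl
  | (i, Sum.inr (TCond.and τ₀ τ₁)), hv, hv' =>
    obtain ⟨w, hw⟩ := G'.or_succ_exists i _ _ hv'
    rcases G'.or_succ_subset i _ _ hv' w hw with rfl | rfl
    · exact ⟨_, (G.and_succ i _ _ hv _).2 (Or.inl rfl), hw⟩
    · exact ⟨_, (G.and_succ i _ _ hv _).2 (Or.inr rfl), hw⟩

theorem exists_state {M : WAA Q A} (p : ℕ → Vert Q A) (hp : ∀ n, M.Succ (p n) (p (n + 1)))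
    (m : ℕ) : ∃ n, m ≤ n ∧ ∃ q, (p n).2 = Sum.inl q := by
  have key : ∀ (τ : TCond Q A) (m i : ℕ), p m = (i, Sum.inr τ) →
      ∃ n, m ≤ n ∧ ∃ q, (p n).2 = Sum.inl q := by
    intro τ
    induction τ with
    | atom B =>
      intro m i h
      have := hp m
      rw [h] at this
      exact this.elim
    | next q =>
      intro m i h
      have := hp m
      rw [h] at this
      have h2 : p (m + 1) = (i + 1, Sum.inl q) := this
      exact ⟨m + 1, by omega, q, by rw [h2]⟩
    | or a b iha ihb =>
      intro m i h
      have := hp m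
      rw [h] at this
      rcases this with h2 | h2
      · obtain ⟨n, hn, h3⟩ := iha _ _ h2
        exact ⟨n, by omega, h3⟩
      · obtain ⟨n, hn, h3⟩ := ihb _ _ h2
        exact ⟨n, by omega, h3⟩
    | and a b iha ihb =>
      intro m i h
      have := hp m
      rw [h] at this
      rcases this with h2 | h2
      · obtain ⟨n, hn, h3⟩ := iha _ _ h2
        exact ⟨n, by omega, h3⟩
      · obtain ⟨n, hn, h3⟩ := ihb _ _ h2
        exact ⟨n, by omega, h3⟩
  rcases h : p m with ⟨i, q | τ⟩
  · exact ⟨m, le_rfl, q, by rw [h]⟩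
  · exact key τ m i h

theorem exists_inf_state [Fintype Q] {M : WAA Q A} (p : ℕ → Vert Q A)
    (hp : ∀ n, M.Succ (p n) (p (n + 1))) :
    ∃ q : Q, ∀ m, ∃ n, m ≤ n ∧ (p n).2 = Sum.inl q := by
  by_contra hcon
  push Not at hcon
  choose m hm using hcon
  obtain ⟨n, hn, q, hq⟩ := exists_state p hp (Finset.univ.sup m)
  exact hm q n (le_trans (Finset.le_sup (Finset.mem_univ q)) hn) hq

theorem not_both [Fintype Q] (M : WAA Q A) (u : ℕ → A) (i : ℕ) (q : Q)
    (h : AcceptsFrom M u i q) (h' : AcceptsFrom M.dual u i q) : False := by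
  obtain ⟨G, hG, hv⟩ := h
  obtain ⟨G', hG', hv'⟩ := h'
  have step := joint_step G G'
  choose! f hf using step
  let p : ℕ → Vert Q A := fun n => f^[n] (i, Sum.inl q)
  have hps : ∀ n, p (n + 1) = f (p n) := fun n => Function.iterate_succ_apply' f n _
  have hmem : ∀ n, p n ∈ G.V ∧ dualV (p n) ∈ G'.V := by
    intro n
    induction n with
    | zero => exact ⟨hv, hv'⟩
    | succ n ih =>
      rw [hps]
      have := hf _ ih.1 ih.2
      exact ⟨(G.edge_mem this.1).2, (G'.edge_mem this.2).2⟩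
  have hE : ∀ n, G.E (p n) (p (n + 1)) := fun n => by
    rw [hps]; exact (hf _ (hmem n).1 (hmem n).2).1
  have hE' : ∀ n, G'.E (dualV (p n)) (dualV (p (n + 1))) := fun n => by
    rw [hps]; exact (hf _ (hmem n).1 (hmem n).2).2
  obtain ⟨r, hr⟩ := exists_inf_state p (fun n => G.succ (hE n))
  have h1 := hG p hE r hr
  have h2 := hG' (fun n => dualV (p n)) hE' r (fun m => by
    obtain ⟨n, hn, hn2⟩ := hr m
    refine ⟨n, hn, ?_⟩
    rcases hpn : p n with ⟨j, s⟩
    rw [hpn] at hn2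
    simp only at hn2
    subst hn2
    simp [hpn, dualV])
  exact h2 h1

/-- A path that is eventually a path of a final run graph has only recurring states. -/
theorem final_tail {M : WAA Q A} {u : ℕ → A} {G : RunGraph M u} (hG : G.Final)
    (p : ℕ → Vert Q A) (k : ℕ) (hp : ∀ n, k ≤ n → G.E (p n) (p (n + 1)))
    (q : Q) (hq : ∀ m, ∃ n, m ≤ n ∧ (p n).2 = Sum.inl q) : q ∈ M.recurring := by
  refine hG (fun n => p (k + n)) (fun n => hp (k + n) (by omega)) q (fun m => ?_)
  obtain ⟨n, hn, h⟩ := hq (k + m)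
  refine ⟨n - k, by omega, ?_⟩
  have : k + (n - k) = n := by omega
  simpa [this] using h

/-- The vertices occurring in some final run graph. -/
def Win (M : WAA Q A) (u : ℕ → A) : Set (Vert Q A) :=
  {v | ∃ G : RunGraph M u, G.Final ∧ v ∈ G.V}

theorem exists_max (M : WAA Q A) (u : ℕ → A) :
    ∃ G : RunGraph M u, G.Final ∧ G.V = M.Win u := by
  classical
  have wf : WellFounded (WellOrderingRel (α := RunGraph M u)) := WellOrderingRel.isWellOrder.wf
  have hex : ∀ v, v ∈ M.Win u → ∃ G : RunGraph M u, G.Final ∧ v ∈ G.V ∧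
      ∀ G' : RunGraph M u, G'.Final → v ∈ G'.V → ¬ WellOrderingRel G' G := by
    intro v hv
    obtain ⟨G, hG, hmin⟩ := wf.has_min {G : RunGraph M u | G.Final ∧ v ∈ G.V} hv
    exact ⟨G, hG.1, hG.2, fun G' h1 h2 => hmin G' ⟨h1, h2⟩⟩
  choose g hgF hgV hgmin using hex
  let H : RunGraph M u :=
    { V := M.Win u
      E := fun v w => ∃ hv : v ∈ M.Win u, (g v hv).E v w
      edge_mem := fun v w ⟨hv, h⟩ => ⟨hv, ⟨_, hgF v hv, ((g v hv).edge_mem h).2⟩⟩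
      cond_subf := fun i τ hv => (g _ hv).cond_subf i τ (hgV _ hv)
      state_succ := fun i q hv w =>
        ⟨fun ⟨hv, h⟩ => ((g _ hv).state_succ i q (hgV _ hv) w).1 h,
          fun h => ⟨hv, ((g _ hv).state_succ i q (hgV _ hv) w).2 h⟩⟩
      next_succ := fun i q hv w =>
        ⟨fun ⟨hv, h⟩ => ((g _ hv).next_succ i q (hgV _ hv) w).1 h,
          fun h => ⟨hv, ((g _ hv).next_succ i q (hgV _ hv) w).2 h⟩⟩
      or_succ_subset := fun i a b hv w ⟨_, h⟩ => (g _ hv).or_succ_subset i a b (hgV _ hv) w h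
      or_succ_exists := fun i a b hv => by
        obtain ⟨w, hw⟩ := (g _ hv).or_succ_exists i a b (hgV _ hv)
        exact ⟨w, hv, hw⟩
      and_succ := fun i a b hv w =>
        ⟨fun ⟨hv, h⟩ => ((g _ hv).and_succ i a b (hgV _ hv) w).1 h,
          fun h => ⟨hv, ((g _ hv).and_succ i a b (hgV _ hv) w).2 h⟩⟩
      atom_succ := fun i B w ⟨hv, h⟩ => (g _ hv).atom_succ i B w h
      atom_ok := fun i B hv => (g _ hv).atom_ok i B (hgV _ hv) }
  refine ⟨H, ?_, rfl⟩
  intro p hp q hq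
  have hW : ∀ n, p n ∈ M.Win u := fun n => (hp n).1
  have hE : ∀ n, (g (p n) (hW n)).E (p n) (p (n + 1)) := fun n => (hp n).2
  -- choose a minimal graph along the path
  obtain ⟨G, ⟨k, hk⟩, hmin⟩ := wf.has_min (Set.range fun n => g (p n) (hW n)) ⟨_, 0, rfl⟩
  have hconst : ∀ n, g (p (k + n)) (hW (k + n)) = G := by
    intro n
    induction n with
    | zero => exact hk
    | succ n ih =>
      have h1 : p (k + (n + 1)) ∈ G.V := by
        have := hE (k + n)
        rw [ih] at this
        exact (G.edge_mem this).2
      have hGF : G.Final := hk ▸ hgF _ _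
      have h2 := hgmin _ (hW (k + (n + 1))) G hGF h1
      have h3 := hmin _ ⟨k + (n + 1), rfl⟩
      rcases trichotomous_of WellOrderingRel G (g (p (k + (n + 1))) (hW _)) with h | h | h
      · exact (h2 h).elim
      · exact h.symm
      · exact (h3 h).elim
  have hGF : G.Final := hk ▸ hgF _ _
  refine final_tail hGF p k (fun n hn => ?_) q hq
  obtain ⟨m, rfl⟩ := Nat.exists_eq_add_of_le hn
  have := hE (k + m)
  rwa [hconst] at this

/-- Valid vertices. -/
def Valid (M : WAA Q A) : Vert Q A → Prop
  | (_, Sum.inl _) => True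
  | (_, Sum.inr τ) => ∃ q, TCond.Subf τ (M.δ q)

theorem ext_win (M : WAA Q A) (u : ℕ → A) (U : Set (Vert Q A))
    (hval : ∀ v ∈ U, M.Valid v) (hloc : ∀ v ∈ U, M.Loc u (M.Win u ∪ U) v)
    (hfin : ∀ p : ℕ → Vert Q A, (∀ n, p n ∈ U) → (∀ n, M.Succ (p n) (p (n + 1))) →
      ∀ q : Q, (∀ m, ∃ n, m ≤ n ∧ (p n).2 = Sum.inl q) → q ∈ M.recurring) :
    U ⊆ M.Win u := by
  classical
  obtain ⟨G, hGF, hGV⟩ := exists_max M u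
  rw [← hGV] at hloc ⊢
  let H : RunGraph M u :=
    { V := G.V ∪ U
      E := fun v w => G.E v w ∨ (v ∉ G.V ∧ v ∈ U ∧ M.Succ v w ∧ w ∈ G.V ∪ U)
      edge_mem := by
        rintro v w (h | ⟨_, h2, _, h4⟩)
        · exact ⟨Or.inl (G.edge_mem h).1, Or.inl (G.edge_mem h).2⟩
        · exact ⟨Or.inr h2, h4⟩
      cond_subf := by
        rintro i τ (h | h)
        · exact G.cond_subf i τ h
        · exact hval _ h
      state_succ := by
        intro i q hv w
        by_cases hG : (i, Sum.inl q) ∈ G.V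
        · simp [hG, G.state_succ i q hG w]
        · have hU := hv.resolve_left hG
          constructor
          · rintro (h | h)
            · exact G.succ h
            · exact h.2.2.1
          · rintro rfl
            exact Or.inr ⟨hG, hU, rfl, hloc _ hU⟩
      next_succ := by
        intro i q hv w
        by_cases hG : (i, Sum.inr (TCond.next q)) ∈ G.V
        · simp [hG, G.next_succ i q hG w]
        · have hU := hv.resolve_left hG
          constructor
          · rintro (h | h)
            · exact G.succ h
            · exact h.2.2.1
          · rintro rfl
            exact Or.inr ⟨hG, hU, rfl, hloc _ hU⟩
      or_succ_subset := by
        rintro i a b hv w (h | h)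
        · exact G.succ h
        · exact h.2.2.1
      or_succ_exists := by
        intro i a b hv
        by_cases hG : (i, Sum.inr (TCond.or a b)) ∈ G.V
        · obtain ⟨w, hw⟩ := G.or_succ_exists i a b hG
          exact ⟨w, Or.inl hw⟩
        · have hU := hv.resolve_left hG
          rcases hloc _ hU with h | h
          · exact ⟨_, Or.inr ⟨hG, hU, Or.inl rfl, h⟩⟩
          · exact ⟨_, Or.inr ⟨hG, hU, Or.inr rfl, h⟩⟩
      and_succ := by
        intro i a b hv w
        by_cases hG : (i, Sum.inr (TCond.and a b)) ∈ G.V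
        · simp [hG, G.and_succ i a b hG w]
        · have hU := hv.resolve_left hG
          constructor
          · rintro (h | h)
            · exact G.succ h
            · exact h.2.2.1
          · rintro (rfl | rfl)
            · exact Or.inr ⟨hG, hU, Or.inl rfl, (hloc _ hU).1⟩
            · exact Or.inr ⟨hG, hU, Or.inr rfl, (hloc _ hU).2⟩
      atom_succ := by
        rintro i B w (h | h)
        · exact G.atom_succ i B w h
        · exact h.2.2.1
      atom_ok := by
        rintro i B (h | h)
        · exact G.atom_ok i B h
        · exact hloc _ h }
  have hHF : H.Final := by
    intro p hp q hq
    by_cases hin : ∃ k, p k ∈ G.V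
    · obtain ⟨k, hk⟩ := hin
      have hstep : ∀ n, p n ∈ G.V → G.E (p n) (p (n + 1)) := by
        intro n hn
        rcases hp n with h | h
        · exact h
        · exact (h.1 hn).elim
      have hall : ∀ n, k ≤ n → p n ∈ G.V := by
        intro n hn
        induction n, hn using Nat.le_induction with
        | base => exact hk
        | succ n hn ih => exact (G.edge_mem (hstep n ih)).2
      exact final_tail hGF p k (fun n hn => hstep n (hall n hn)) q hq
    · push Not at hin
      refine hfin p (fun n => (H.edge_mem (hp n)).1.resolve_left (hin n))
        (fun n => H.succ (hp n)) q hq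
  intro v hv
  rw [hGV]
  exact ⟨H, hHF, Or.inr hv⟩

theorem valid_dual {M : WAA Q A} {v : Vert Q A} (h : M.Valid v) : M.dual.Valid (dualV v) := by
  match v, h with
  | (i, Sum.inl q), _ => trivial
  | (i, Sum.inr τ), ⟨q, hq⟩ => exact ⟨q, hq.dual'⟩

theorem win_of_loc (M : WAA Q A) (u : ℕ → A) (v : Vert Q A) (hv : M.Valid v)
    (h : M.Loc u (M.Win u) v) : v ∈ M.Win u := by
  refine ext_win M u {v} (by simpa using hv) ?_ ?_ rfl
  · intro w hw
    obtain rfl : w = v := hw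
    rcases w with ⟨i, q | B | q | ⟨a, b⟩ | ⟨a, b⟩⟩
    · exact Or.inl h
    · exact h
    · exact Or.inl h
    · exact h.imp Or.inl Or.inl
    · exact ⟨Or.inl h.1, Or.inl h.2⟩
  · intro p hp hs q hq
    exfalso
    obtain ⟨n, -, hn⟩ := hq 0
    have h1 : p n = v := hp n
    have h2 : p (n + 1) = v := hp (n + 1)
    have h3 := hs n
    rw [h2, h1] at h3
    rw [h1] at hn
    rcases v with ⟨i, s⟩
    simp only at hn
    subst hn
    have h4 : ((i, Sum.inl q) : Vert Q A) = (i, Sum.inr (M.δ q)) := h3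
    simp at h4

abbrev Reach (M : WAA Q A) : Q → Q → Prop :=
  Relation.ReflTransGen (fun x y => (M.δ x).NextOccurs y)

theorem key (M : WAA Q A) (u : ℕ → A) (q : Q) (hq : q ∈ M.recurring)
    (hmin : ∀ q' j, M.Reach q q' → ¬ AcceptsFrom M u j q' → ¬ AcceptsFrom M.dual u j q' →
      M.Reach q' q) (i : ℕ) (h1 : ¬ AcceptsFrom M u i q) (h2 : ¬ AcceptsFrom M.dual u i q) :
    False := by
  let C : Vert Q A → Prop := fun v => match v with
    | (_, Sum.inl r) => M.Reach q r
    | (_, Sum.inr τ) => ∃ r, M.Reach q r ∧ TCond.Subf τ (M.δ r)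
  let U : Set (Vert Q A) := {v | C v ∧ v ∉ M.Win u ∧ dualV v ∉ M.dual.Win u}
  have hCval : ∀ v, C v → M.Valid v := by
    intro v hv
    match v, hv with
    | (_, Sum.inl _), _ => trivial
    | (_, Sum.inr _), ⟨r, _, h⟩ => exact ⟨r, h⟩
  have hCs : ∀ w, C w → dualV w ∉ M.dual.Win u → w ∈ M.Win u ∪ U := by
    intro w hw h
    by_cases hw' : w ∈ M.Win u
    · exact Or.inl hw'
    · exact Or.inr ⟨hw, hw', h⟩
  have hsub : U ⊆ M.Win u := by
    refine ext_win M u U (fun v hv => hCval v hv.1) ?_ ?_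
    · rintro v ⟨hC, -, hd⟩
      have hnl : ¬ M.dual.Loc u (M.dual.Win u) (dualV v) := fun h =>
        hd (win_of_loc M.dual u _ (valid_dual (hCval v hC)) h)
      match v, hC, hnl with
      | (i, Sum.inl r), hC, hnl => exact hCs _ ⟨r, hC, .refl _⟩ hnl
      | (i, Sum.inr (TCond.atom B)), hC, hnl => exact not_not.1 hnl
      | (i, Sum.inr (TCond.next r)), ⟨s, hs, hsf⟩, hnl =>
        exact hCs (i + 1, Sum.inl r) (hs.tail (hsf.nextOccurs' r rfl)) hnl
      | (i, Sum.inr (TCond.or a b)), ⟨s, hs, hsf⟩, hnl =>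
        by_cases ha : dualV (i, Sum.inr a) ∈ M.dual.Win u
        · by_cases hb : dualV (i, Sum.inr b) ∈ M.dual.Win u
          · exact (hnl ⟨ha, hb⟩).elim
          · exact Or.inr (hCs _ ⟨s, hs, hsf.trans' (.orR (.refl _))⟩ hb)
        · exact Or.inl (hCs _ ⟨s, hs, hsf.trans' (.orL (.refl _))⟩ ha)
      | (i, Sum.inr (TCond.and a b)), ⟨s, hs, hsf⟩, hnl =>
        exact ⟨hCs _ ⟨s, hs, hsf.trans' (.andL (.refl _))⟩ fun h => hnl (Or.inl h),
          hCs _ ⟨s, hs, hsf.trans' (.andR (.refl _))⟩ fun h => hnl (Or.inr h)⟩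
    · intro p hp _ r hr
      obtain ⟨n, -, hn⟩ := hr 0
      have hpn := hp n
      rcases hpe : p n with ⟨j, s⟩
      rw [hpe] at hn hpn
      simp only at hn
      subst hn
      obtain ⟨hC, ha, hb⟩ := hpn
      exact (M.weak q r hC (hmin r j hC ha hb)).1 hq
  exact h1 (hsub (show (i, Sum.inl q) ∈ U from ⟨.refl, h1, h2⟩))

theorem reach_dual (M : WAA Q A) (q r : Q) : M.dual.Reach q r ↔ M.Reach q r := by
  have : (fun x y => (M.dual.δ x).NextOccurs y) = (fun x y => (M.δ x).NextOccurs y) := by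
    funext x y
    exact propext (TCond.dual_nextOccurs _ _)
  unfold Reach
  rw [this]

theorem one_of [Fintype Q] (M : WAA Q A) (u : ℕ → A) (i : ℕ) (q : Q)
    (h1 : ¬ AcceptsFrom M u i q) (h2 : ¬ AcceptsFrom M.dual u i q) : False := by
  let S : Q → Q → Prop := fun a b => M.Reach b a ∧ ¬ M.Reach a b
  haveI : IsTrans Q S := ⟨fun a b c hab hbc =>
    ⟨hbc.1.trans hab.1, fun h => hab.2 (h.trans hbc.1)⟩⟩
  haveI : Std.Irrefl S := ⟨fun a h => h.2 h.1⟩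
  have wf : WellFounded S := Finite.wellFounded_of_trans_of_irrefl S
  obtain ⟨r, ⟨j, hj1, hj2⟩, hmin⟩ := wf.has_min
    {r | ∃ j, ¬ AcceptsFrom M u j r ∧ ¬ AcceptsFrom M.dual u j r} ⟨q, i, h1, h2⟩
  have hm : ∀ q' j, M.Reach r q' → ¬ AcceptsFrom M u j q' → ¬ AcceptsFrom M.dual u j q' →
      M.Reach q' r := by
    intro q' j hr a b
    by_contra hc
    exact hmin q' ⟨j, a, b⟩ ⟨hr, hc⟩
  by_cases hR : r ∈ M.recurring
  · exact key M u r hR hm j hj1 hj2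
  · refine key M.dual u r hR ?_ j hj2 (by rwa [dual_dual_eq])
    intro q' j hr a b
    rw [dual_dual_eq] at b
    rw [reach_dual] at hr ⊢
    exact hm q' j hr b a

end WAA

/-- complementation of weak alternating automata:
the suffix `u[i,ω)` is accepted from `q` by `M` iff it is not accepted from `q`
by the complementary automaton `M.dual`. -/
theorem weak_alternating_complementation {Q A : Type*} [Fintype Q]
    (M : WAA Q A) (q : Q) (u : ℕ → A) (i : ℕ) :
    WAA.AcceptsFrom M u i q ↔ ¬ WAA.AcceptsFrom M.dual u i q := by
  exact ⟨fun h h2 => WAA.not_both M u i q h h2,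
    fun h => by_contra fun h1 => WAA.one_of M u i q h1 h⟩
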